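/- Interaction equivalence ≡int on ordinary λ-terms is a consistent λ-theory (a compatible equivalence containing β-conversion, different from the total relation); moreover it is not extensional (it does not contain η-conversion). -/

import Mathlib

set_option autoImplicit false

/-! ### Players -/

inductive Player : Type
  | white
  | black
deriving DecidableEq

/-- The opposite player. -/
def Player.op : Player → Player
  | .white => .black
  | .black => .white

/-- `gamma p q` is `0` if the players agree (silent) and `1` otherwise (interaction). -/
def Player.gamma (p q : Player) : ℕ := if p = q then 0 else 1

/-! ### Ordinary λ-terms (de Bruijn representation) -/

inductive Lam : Type
  | var : ℕ → Lam
  | lam : Lam → Lam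
  | app : Lam → Lam → Lam
deriving DecidableEq

namespace Lam

/-- Shift the free de Bruijn indices ≥ `d` by one. -/
def liftAt : Lam → ℕ → Lam
  | .var n, d => .var (if n < d then n else n + 1)
  | .lam t, d => .lam (t.liftAt (d + 1))
  | .app t u, d => .app (t.liftAt d) (u.liftAt d)

/-- Capture-avoiding substitution of `u` for the de Bruijn index `x`. -/
def subst : Lam → ℕ → Lam → Lam
  | .var n, x, u => if n = x then u else if x < n then .var (n - 1) else .var n
  | .lam t, x, u => .lam (t.subst (x + 1) (u.liftAt 0))
  | .app t s, x, u => .app (t.subst x u) (s.subst x u)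

end Lam

/-- Root β-rule: `(λx.t) u ↦ t[x:=u]`. -/
inductive LBetaRoot : Lam → Lam → Prop
  | beta (t u : Lam) : LBetaRoot (.app (.lam t) u) (t.subst 0 u)

/-- Root η-rule: `λx. t x ↦ t` with `x ∉ FV(t)` (enforced by the lifting). -/
inductive LEtaRoot : Lam → Lam → Prop
  | eta (t : Lam) : LEtaRoot (.lam (.app (t.liftAt 0) (.var 0))) t

/-- Closure of a root relation under all contexts. -/
inductive LFull (R : Lam → Lam → Prop) : Lam → Lam → Prop
  | root {t u : Lam} : R t u → LFull R t u
  | lam {t u : Lam} : LFull R t u → LFull R (.lam t) (.lam u)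
  | appL {t t' : Lam} (u : Lam) : LFull R t t' → LFull R (.app t u) (.app t' u)
  | appR (t : Lam) {u u' : Lam} : LFull R u u' → LFull R (.app t u) (.app t u')

/-- Closure under applicative spine contexts `⟨·⟩ t1 … tk`. -/
inductive LSpine (R : Lam → Lam → Prop) : Lam → Lam → Prop
  | root {t u : Lam} : R t u → LSpine R t u
  | appL {t t' : Lam} (u : Lam) : LSpine R t t' → LSpine R (.app t u) (.app t' u)

/-- Closure under head contexts `λx1…xn.⟨·⟩ t1 … tk`. -/
inductive LHead (R : Lam → Lam → Prop) : Lam → Lam → Prop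
  | spine {t u : Lam} : LSpine R t u → LHead R t u
  | lam {t u : Lam} : LHead R t u → LHead R (.lam t) (.lam u)

/-- β-reduction. -/
def LBeta : Lam → Lam → Prop := LFull LBetaRoot
/-- η-reduction. -/
def LEta : Lam → Lam → Prop := LFull LEtaRoot
/-- Head reduction. -/
def LHStep : Lam → Lam → Prop := LHead LBetaRoot
/-- Multistep head reduction. -/
def LHSteps : Lam → Lam → Prop := Relation.ReflTransGen LHStep

/-- β-conversion (reflexive-symmetric-transitive closure of β-reduction). -/
def LBetaConv : Lam → Lam → Prop :=
  Relation.ReflTransGen (fun a b => LBeta a b ∨ LBeta b a)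
/-- η-conversion. -/
def LEtaConv : Lam → Lam → Prop :=
  Relation.ReflTransGen (fun a b => LEta a b ∨ LEta b a)

/-- Head normal forms: no head step out of `t`. -/
def Lam.LHNF (t : Lam) : Prop := ∀ u, ¬ LHStep t u

/-- Head convergence: `t ⇓h`. -/
def Lam.HConv (t : Lam) : Prop := ∃ h, LHSteps t h ∧ h.LHNF

/-- Ordinary contexts (one hole). -/
inductive LCtx : Type
  | hole : LCtx
  | lam : LCtx → LCtx
  | appL : LCtx → Lam → LCtx
  | appR : Lam → LCtx → LCtx

/-- Plugging (allowing variable capture). -/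
def LCtx.fill : LCtx → Lam → Lam
  | .hole, t => t
  | .lam C, t => .lam (C.fill t)
  | .appL C u, t => .app (C.fill t) u
  | .appR s C, t => .app s (C.fill t)

/-- Head contextual preorder on λ-terms. -/
def CtxLe (t u : Lam) : Prop := ∀ C : LCtx, (C.fill t).HConv → (C.fill u).HConv

/-! ### Checkers terms -/

inductive CTerm : Type
  | var : ℕ → CTerm
  | lam : Player → CTerm → CTerm
  | app : Player → CTerm → CTerm → CTerm
deriving DecidableEq

namespace CTerm

/-- Shift the free de Bruijn indices ≥ `d` by one. -/
def liftAt : CTerm → ℕ → CTerm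
  | .var n, d => .var (if n < d then n else n + 1)
  | .lam p t, d => .lam p (t.liftAt (d + 1))
  | .app p t u, d => .app p (t.liftAt d) (u.liftAt d)

/-- Capture-avoiding substitution of `u` for the de Bruijn index `x`. -/
def subst : CTerm → ℕ → CTerm → CTerm
  | .var n, x, u => if n = x then u else if x < n then .var (n - 1) else .var n
  | .lam p t, x, u => .lam p (t.subst (x + 1) (u.liftAt 0))
  | .app p t s, x, u => .app p (t.subst x u) (s.subst x u)

/-- The underlying ordinary λ-term of a checkers term. -/
def untag : CTerm → Lam
  | .var n => .var n
  | .lam _ t => .lam t.untag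
  | .app _ t u => .app t.untag u.untag

end CTerm

/-- Player lifting: tag every abstraction and application with player `p`. -/
def Lam.tag : Lam → Player → CTerm
  | .var n, _ => .var n
  | .lam t, p => .lam p (t.tag p)
  | .app t u, p => .app p (t.tag p) (u.tag p)

/-- Silent β root rule: the abstraction and the application carry the same player. -/
inductive SilentRoot : CTerm → CTerm → Prop
  | beta (p : Player) (t u : CTerm) : SilentRoot (.app p (.lam p t) u) (t.subst 0 u)

/-- Interaction β root rule: the application carries the opposite player of the abstraction. -/
inductive InterRoot : CTerm → CTerm → Prop
  | beta (p : Player) (t u : CTerm) : InterRoot (.app p.op (.lam p t) u) (t.subst 0 u)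

/-- Closure of a root relation under all checkers contexts. -/
inductive CFull (R : CTerm → CTerm → Prop) : CTerm → CTerm → Prop
  | root {t u : CTerm} : R t u → CFull R t u
  | lam (p : Player) {t u : CTerm} : CFull R t u → CFull R (.lam p t) (.lam p u)
  | appL (p : Player) {t t' : CTerm} (u : CTerm) : CFull R t t' → CFull R (.app p t u) (.app p t' u)
  | appR (p : Player) (t : CTerm) {u u' : CTerm} : CFull R u u' → CFull R (.app p t u) (.app p t u')

/-- Closure under applicative spine contexts `⟨·⟩ @_{q1} t1 … @_{qk} tk`. -/
inductive CSpine (R : CTerm → CTerm → Prop) : CTerm → CTerm → Prop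
  | root {t u : CTerm} : R t u → CSpine R t u
  | appL (p : Player) {t t' : CTerm} (u : CTerm) : CSpine R t t' → CSpine R (.app p t u) (.app p t' u)

/-- Closure under checkers head contexts `λ_{p1}x1…λ_{pn}xn.⟨·⟩ @_{q1} t1 … @_{qk} tk`. -/
inductive CHead (R : CTerm → CTerm → Prop) : CTerm → CTerm → Prop
  | spine {t u : CTerm} : CSpine R t u → CHead R t u
  | lam (p : Player) {t u : CTerm} : CHead R t u → CHead R (.lam p t) (.lam p u)

/-- Silent β-reduction `→τ`. -/
def StepTau : CTerm → CTerm → Prop := CFull SilentRoot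
/-- Interaction β-reduction `→⊛`. -/
def StepInt : CTerm → CTerm → Prop := CFull InterRoot
/-- Checkers β-reduction `→βch`. -/
def StepBch (t u : CTerm) : Prop := StepTau t u ∨ StepInt t u

/-- Silent head reduction `→hτ`. -/
def HStepTau : CTerm → CTerm → Prop := CHead SilentRoot
/-- Interaction head reduction `→h⊛`. -/
def HStepInt : CTerm → CTerm → Prop := CHead InterRoot
/-- Checkers head reduction `→hch`. -/
def HStepCh (t u : CTerm) : Prop := HStepTau t u ∨ HStepInt t u

/-- Checkers head normal form. -/
def CTerm.HNF (t : CTerm) : Prop := ∀ u, ¬ HStepCh t u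

/-- `BigStep t k` means `t ⇓^k`: the (deterministic) checkers head evaluation of `t`
terminates and performs exactly `k` interaction steps. -/
inductive BigStep : CTerm → ℕ → Prop
  | nf {t : CTerm} : t.HNF → BigStep t 0
  | silent {t u : CTerm} {k : ℕ} : HStepTau t u → BigStep u k → BigStep t k
  | inter {t u : CTerm} {k : ℕ} : HStepInt t u → BigStep u k → BigStep t (k + 1)

/-- `HRed t n i u`: a checkers head reduction sequence from `t` to `u` of length `n`
containing exactly `i` interaction steps. -/
inductive HRed : CTerm → ℕ → ℕ → CTerm → Prop
  | refl (t : CTerm) : HRed t 0 0 t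
  | silent {t u s : CTerm} {n i : ℕ} : HStepTau t u → HRed u n i s → HRed t (n + 1) i s
  | inter {t u s : CTerm} {n i : ℕ} : HStepInt t u → HRed u n i s → HRed t (n + 1) (i + 1) s

/-- Checkers contexts (one hole). -/
inductive CCtx : Type
  | hole : CCtx
  | lam : Player → CCtx → CCtx
  | appL : Player → CCtx → CTerm → CCtx
  | appR : Player → CTerm → CCtx → CCtx

/-- Plugging (allowing variable capture). -/
def CCtx.fill : CCtx → CTerm → CTerm
  | .hole, t => t
  | .lam p C, t => .lam p (C.fill t)
  | .appL p C u, t => .app p (C.fill t) u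
  | .appR p s C, t => .app p s (C.fill t)

/-- Player lifting of ordinary contexts. -/
def LCtx.tag : LCtx → Player → CCtx
  | .hole, _ => .hole
  | .lam C, p => .lam p (C.tag p)
  | .appL C u, p => .appL p (C.tag p) (u.tag p)
  | .appR s C, p => .appR p (s.tag p) (C.tag p)

/-- Checkers interaction preorder `≼ctx⊛` on checkers terms. -/
def IntCtxLe (t u : CTerm) : Prop :=
  ∀ (C : CCtx) (k : ℕ), BigStep (C.fill t) k → BigStep (C.fill u) k

/-- Checkers interaction improvement `≼imp⊛` on checkers terms. -/
def ImpCtxLe (t u : CTerm) : Prop :=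
  ∀ (C : CCtx) (k : ℕ), BigStep (C.fill t) k → ∃ k', k' ≤ k ∧ BigStep (C.fill u) k'

/-- Interaction preorder `⊑int` on ordinary λ-terms, via black lifting. -/
def IntLe (t u : Lam) : Prop := IntCtxLe (t.tag .black) (u.tag .black)

/-- Interaction improvement `⊑int·imp` on ordinary λ-terms, via black lifting. -/
def ImpLe (t u : Lam) : Prop := ImpCtxLe (t.tag .black) (u.tag .black)

/-- Interaction equivalence `≡int`. -/
def IntEq (t u : Lam) : Prop := IntLe t u ∧ IntLe u t

/-- Silent conversion `=τ`: reflexive-symmetric-transitive closure of `→τ`. -/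
def SilentConv : CTerm → CTerm → Prop :=
  Relation.ReflTransGen (fun a b => StepTau a b ∨ StepTau b a)


/-! ### Substitution lemmas -/

namespace CTerm

theorem lift_lift (t : CTerm) : ∀ i j, i ≤ j →
    (t.liftAt i).liftAt (j + 1) = (t.liftAt j).liftAt i := by
  induction t with
  | var n => intro i j h; simp only [liftAt]; congr 1; split_ifs <;> omega
  | lam p t ih => intro i j h; simp only [liftAt]; rw [ih (i+1) (j+1) (by omega)]
  | app p t u iht ihu => intro i j h; simp only [liftAt]; rw [iht i j h, ihu i j h]

theorem lift_subst_le (t : CTerm) : ∀ x d u, x ≤ d →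
    (t.subst x u).liftAt d = (t.liftAt (d + 1)).subst x (u.liftAt d) := by
  induction t with
  | var n =>
    intro x d u h
    simp only [subst, liftAt]
    split_ifs <;> first | rfl | omega | (simp only [liftAt]; congr 1; split_ifs <;> omega)
  | lam p t ih =>
    intro x d u h
    simp only [subst, liftAt]
    rw [ih (x+1) (d+1) _ (by omega), lift_lift u 0 d (by omega)]
  | app p t u iht ihu =>
    intro x d v h; simp only [subst, liftAt]; rw [iht x d v h, ihu x d v h]

theorem lift_subst_ge (t : CTerm) : ∀ x d u, d ≤ x →
    (t.subst x u).liftAt d = (t.liftAt d).subst (x + 1) (u.liftAt d) := by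
  induction t with
  | var n =>
    intro x d u h
    simp only [subst, liftAt]
    split_ifs <;> first | rfl | omega | (simp only [liftAt]; congr 1; split_ifs <;> omega)
  | lam p t ih =>
    intro x d u h
    simp only [subst, liftAt]
    rw [ih (x+1) (d+1) _ (by omega), lift_lift u 0 d (by omega)]
  | app p t u iht ihu =>
    intro x d v h; simp only [subst, liftAt]; rw [iht x d v h, ihu x d v h]

theorem subst_lift (t : CTerm) : ∀ d u, (t.liftAt d).subst d u = t := by
  induction t with
  | var n =>
    intro d u
    simp only [liftAt, subst]
    split_ifs <;> first | rfl | omega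
  | lam p t ih => intro d u; simp only [liftAt, subst]; rw [ih]
  | app p t u iht ihu => intro d v; simp only [liftAt, subst]; rw [iht, ihu]

theorem subst_subst (t : CTerm) : ∀ i j u v, i ≤ j →
    (t.subst i u).subst j v = (t.subst (j + 1) (v.liftAt i)).subst i (u.subst j v) := by
  induction t with
  | var n =>
    intro i j u v h
    rcases lt_trichotomy n i with hn | hn | hn
    · simp [subst, show n ≠ i by omega, show ¬ i < n by omega, show n ≠ j by omega,
        show ¬ j < n by omega, show n ≠ j + 1 by omega, show ¬ j + 1 < n by omega]
    · subst hn
      simp [subst, show n ≠ j + 1 by omega, show ¬ j + 1 < n by omega]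
    · rcases lt_trichotomy n (j+1) with hj | hj | hj
      · simp [subst, show n ≠ i by omega, hn, show n - 1 ≠ j by omega,
          show ¬ j < n - 1 by omega, show n ≠ j + 1 by omega, show ¬ j + 1 < n by omega]
      · subst hj
        simp [subst, show j + 1 ≠ i by omega, hn, subst_lift]
      · simp [subst, show n ≠ i by omega, hn, show n - 1 ≠ j by omega,
          show j < n - 1 by omega, show n ≠ j + 1 by omega, hj, show n - 1 ≠ i by omega,
          show i < n - 1 by omega]
  | lam p t ih =>
    intro i j u v h
    simp only [subst]
    rw [ih (i+1) (j+1) _ _ (by omega), lift_lift v 0 i (by omega),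
      lift_subst_ge u j 0 v (by omega)]
  | app p t u iht ihu =>
    intro i j a b h; simp only [subst]; rw [iht i j a b h, ihu i j a b h]

end CTerm

/-! ### Generic labelled roots -/

/-- Root β-rule restricted by a condition on the two players. -/
inductive GRoot (P : Player → Player → Prop) : CTerm → CTerm → Prop
  | beta {p q : Player} (h : P p q) (t u : CTerm) :
      GRoot P (.app q (.lam p t) u) (t.subst 0 u)

def PSil (p q : Player) : Prop := q = p
def PInt (p q : Player) : Prop := q = p.op

theorem silentRoot_eq : SilentRoot = GRoot PSil := by
  funext t u; apply propext; constructor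
  · rintro ⟨p, t, u⟩; exact GRoot.beta (P := PSil) rfl t u
  · rintro ⟨h, t, u⟩; cases h; exact SilentRoot.beta _ t u

theorem interRoot_eq : InterRoot = GRoot PInt := by
  funext t u; apply propext; constructor
  · rintro ⟨p, t, u⟩; exact GRoot.beta (P := PInt) rfl t u
  · rintro ⟨h, t, u⟩; cases h; exact InterRoot.beta _ t u

theorem pSil_not_pInt {p q : Player} (h : PSil p q) (h' : PInt p q) : False := by
  cases h; cases p <;> cases h'

theorem rtg_map {r s : CTerm → CTerm → Prop} (f : CTerm → CTerm)
    (hf : ∀ a b, r a b → s (f a) (f b)) {t u : CTerm} (h : Relation.ReflTransGen r t u) :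
    Relation.ReflTransGen s (f t) (f u) := by
  induction h with
  | refl => exact .refl
  | tail _ h ih => exact ih.tail (hf _ _ h)

/-- Weak silent head reduction (spine contexts only). -/
abbrev WStep : CTerm → CTerm → Prop := CSpine (GRoot PSil)
abbrev WSteps : CTerm → CTerm → Prop := Relation.ReflTransGen WStep

theorem CSpine.liftAt {P t u} (h : CSpine (GRoot P) t u) (d : ℕ) :
    CSpine (GRoot P) (t.liftAt d) (u.liftAt d) := by
  induction h with
  | root h =>
    cases h with
    | beta h t u =>
      rw [CTerm.lift_subst_le t 0 d u (by omega)]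
      exact .root (.beta h _ _)
  | appL p u h ih => exact .appL p _ ih

theorem CSpine.subst {P t u} (h : CSpine (GRoot P) t u) (x : ℕ) (v : CTerm) :
    CSpine (GRoot P) (t.subst x v) (u.subst x v) := by
  induction h with
  | root h =>
    cases h with
    | beta h t u =>
      rw [CTerm.subst_subst t 0 x u v (by omega)]
      exact .root (.beta h _ _)
  | appL p u h ih => exact .appL p _ ih

theorem WSteps.liftAt {t u} (h : WSteps t u) (d : ℕ) : WSteps (t.liftAt d) (u.liftAt d) :=
  rtg_map (fun t : CTerm => t.liftAt d) (fun _ _ h => CSpine.liftAt h d) h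

theorem WSteps.subst {t u} (h : WSteps t u) (x : ℕ) (v : CTerm) :
    WSteps (t.subst x v) (u.subst x v) :=
  rtg_map (fun t : CTerm => t.subst x v) (fun _ _ h => CSpine.subst h x v) h

theorem WSteps.appL {t u} (h : WSteps t u) (p : Player) (v : CTerm) :
    WSteps (.app p t v) (.app p u v) :=
  rtg_map (fun t : CTerm => .app p t v) (fun _ _ h => CSpine.appL p v h) h

/-! ### Standard silent reduction -/

inductive Std : CTerm → CTerm → Prop
  | var {M : CTerm} {n : ℕ} : WSteps M (.var n) → Std M (.var n)
  | lam {M A A' : CTerm} {p : Player} : WSteps M (.lam p A) → Std A A' → Std M (.lam p A')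
  | app {M A B A' B' : CTerm} {p : Player} : WSteps M (.app p A B) → Std A A' → Std B B' →
      Std M (.app p A' B')

theorem Std.refl (t : CTerm) : Std t t := by
  induction t with
  | var n => exact .var .refl
  | lam p t ih => exact .lam .refl ih
  | app p t u iht ihu => exact .app .refl iht ihu

theorem Std.expand {M N K} (h : WSteps M N) (h' : Std N K) : Std M K := by
  cases h' with
  | var h1 => exact .var (h.trans h1)
  | lam h1 h2 => exact .lam (h.trans h1) h2
  | app h1 h2 h3 => exact .app (h.trans h1) h2 h3

theorem Std.liftAt {M N} (h : Std M N) : ∀ d, Std (M.liftAt d) (N.liftAt d) := by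
  induction h with
  | var h1 => intro d; exact Std.expand (h1.liftAt d) (Std.refl _)
  | lam h1 _ ih => intro d; exact .lam (h1.liftAt d) (ih (d+1))
  | app h1 _ _ ih1 ih2 => intro d; exact .app (h1.liftAt d) (ih1 d) (ih2 d)

theorem Std.subst {M N} (h : Std M N) : ∀ x U V, Std U V → Std (M.subst x U) (N.subst x V) := by
  induction h with
  | @var M n h1 =>
    intro x U V hU
    refine Std.expand (h1.subst x U) ?_
    simp only [CTerm.subst]
    split_ifs
    · exact hU
    · exact Std.refl _
    · exact Std.refl _
  | lam h1 _ ih =>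
    intro x U V hU; exact .lam (h1.subst x U) (ih (x+1) _ _ (hU.liftAt 0))
  | app h1 _ _ ih1 ih2 =>
    intro x U V hU; exact .app (h1.subst x U) (ih1 x _ _ hU) (ih2 x _ _ hU)

/-- Closure of `Std` under silent steps on the right. -/
theorem Std.step {N N'} (h : CFull (GRoot PSil) N N') : ∀ {M}, Std M N → Std M N' := by
  induction h with
  | root h =>
    intro M hM
    cases h with
    | beta h t u =>
      cases hM with
      | app h1 h2 h3 =>
        cases h2 with
        | lam h4 h5 =>
          refine Std.expand ((h1.trans (WSteps.appL h4 _ _)).tail (.root (.beta h _ _))) ?_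
          exact h5.subst 0 _ _ h3
  | lam p _ ih =>
    intro M hM
    cases hM with
    | lam h1 h2 => exact .lam h1 (ih h2)
  | appL p u _ ih =>
    intro M hM
    cases hM with
    | app h1 h2 h3 => exact .app h1 (ih h2) h3
  | appR p t _ ih =>
    intro M hM
    cases hM with
    | app h1 h2 h3 => exact .app h1 h2 (ih h3)

theorem CSpine.full {R t u} (h : CSpine R t u) : CFull R t u := by
  induction h with
  | root h => exact .root h
  | appL p u _ ih => exact .appL p u ih

theorem CHead.full {R t u} (h : CHead R t u) : CFull R t u := by
  induction h with
  | spine h => exact h.full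
  | lam p _ ih => exact .lam p ih

/-- Silent head reduction sequences. -/
abbrev HSteps : CTerm → CTerm → Prop := Relation.ReflTransGen (CHead (GRoot PSil))

theorem WSteps.head {t u} (h : WSteps t u) : HSteps t u :=
  rtg_map id (fun _ _ h => CHead.spine h) h

theorem HSteps.lam {t u} (h : HSteps t u) (p : Player) : HSteps (.lam p t) (.lam p u) :=
  rtg_map (fun t : CTerm => .lam p t) (fun _ _ h => CHead.lam p h) h

theorem Std.spine_back {P N N'} (h : CSpine (GRoot P) N N') : ∀ {M}, Std M N →
    ∃ M1 M2, WSteps M M1 ∧ CSpine (GRoot P) M1 M2 ∧ Std M2 N' := by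
  induction h with
  | root h =>
    intro M hM
    cases h with
    | beta h t u =>
      cases hM with
      | app h1 h2 h3 =>
        cases h2 with
        | lam h4 h5 =>
          exact ⟨_, _, h1.trans (WSteps.appL h4 _ _), .root (.beta h _ _), h5.subst 0 _ _ h3⟩
  | appL p u _ ih =>
    intro M hM
    cases hM with
    | app h1 h2 h3 =>
      obtain ⟨A1, A2, k1, k2, k3⟩ := ih h2
      exact ⟨_, _, h1.trans (WSteps.appL k1 _ _), .appL p _ k2, .app .refl k3 h3⟩

theorem Std.head_back {P N N'} (h : CHead (GRoot P) N N') : ∀ {M}, Std M N →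
    ∃ M1 M2, HSteps M M1 ∧ CHead (GRoot P) M1 M2 ∧ Std M2 N' := by
  induction h with
  | spine h =>
    intro M hM
    obtain ⟨M1, M2, k1, k2, k3⟩ := hM.spine_back h
    exact ⟨M1, M2, k1.head, .spine k2, k3⟩
  | lam p _ ih =>
    intro M hM
    cases hM with
    | lam h1 h2 =>
      obtain ⟨M1, M2, k1, k2, k3⟩ := ih h2
      exact ⟨_, _, h1.head.trans (k1.lam p), .lam p k2, .lam .refl k3⟩

/-- Determinism of spine steps. -/
theorem CSpine.det {P Q t u} (h : CSpine (GRoot P) t u) : ∀ {v}, CSpine (GRoot Q) t v →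
    u = v ∧ ∃ p q, P p q ∧ Q p q := by
  induction h with
  | root h =>
    intro v hv
    cases h with
    | beta h t u =>
      cases hv with
      | root h' => cases h' with
        | beta h' => exact ⟨rfl, _, _, h, h'⟩
      | appL _ _ h' => cases h' with
        | root h' => cases h'
  | appL p u h ih =>
    intro v hv
    cases hv with
    | root h' => cases h' with
      | beta h' => cases h with
        | root h => cases h
    | appL _ _ h' =>
      obtain ⟨rfl, hh⟩ := ih h'
      exact ⟨rfl, hh⟩

theorem CHead.det {P Q t u} (h : CHead (GRoot P) t u) : ∀ {v}, CHead (GRoot Q) t v →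
    u = v ∧ ∃ p q, P p q ∧ Q p q := by
  induction h with
  | spine h =>
    intro v hv
    cases hv with
    | spine h' => exact h.det h'
    | lam p h' => cases h with
      | root h => cases h
  | lam p h ih =>
    intro v hv
    cases hv with
    | spine h' => cases h' with
      | root h => cases h
    | lam p h' =>
      obtain ⟨rfl, hh⟩ := ih h'
      exact ⟨rfl, hh⟩

/-- `Std` is a simulation from left to right. -/
theorem Std.spine_forth {P M M'} (h : CSpine (GRoot P) M M') : ∀ {N}, Std M N →
    ((∃ p q, P p q ∧ PSil p q) ∧ Std M' N) ∨
      ∃ N', CSpine (GRoot P) N N' ∧ Std M' N' := by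
  have key : ∀ {M M' K}, CSpine (GRoot P) M M' → WSteps M K →
      M = K ∨ ((∃ p q, P p q ∧ PSil p q) ∧ WSteps M' K) := by
    intro M M' K h hw
    rcases Relation.ReflTransGen.cases_head hw with h0 | ⟨c, h1, h2⟩
    · exact .inl h0
    · obtain ⟨rfl, hh⟩ := h.det h1
      exact .inr ⟨hh, h2⟩
  induction h with
  | root hr =>
    intro N hN
    have hs := CSpine.root hr
    cases hN with
    | var h1 =>
      rcases key hs h1 with e | ⟨hh, hw⟩
      · subst e; cases hr
      · exact .inl ⟨hh, .var hw⟩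
    | lam h1 h2 =>
      rcases key hs h1 with e | ⟨hh, hw⟩
      · subst e; cases hr
      · exact .inl ⟨hh, .lam hw h2⟩
    | app h1 h2 h3 =>
      rcases key hs h1 with e | ⟨hh, hw⟩
      · subst e
        cases hr with
        | beta hp t u =>
          cases h2 with
          | var h4 =>
            rcases Relation.ReflTransGen.cases_head h4 with h0 | ⟨c, h5, _⟩
            · cases h0
            · cases h5 with
              | root h => cases h
          | lam h4 h6 =>
            rcases Relation.ReflTransGen.cases_head h4 with h0 | ⟨c, h5, _⟩
            · cases h0
              exact .inr ⟨_, .root (.beta hp _ _), h6.subst 0 _ _ h3⟩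
            · cases h5 with
              | root h => cases h
          | app h4 h6 h7 =>
            rcases Relation.ReflTransGen.cases_head h4 with h0 | ⟨c, h5, _⟩
            · cases h0
            · cases h5 with
              | root h => cases h
      · exact .inl ⟨hh, .app hw h2 h3⟩
  | appL p u hr ih =>
    intro N hN
    have hs := CSpine.appL p u hr
    cases hN with
    | var h1 =>
      rcases key hs h1 with e | ⟨hh, hw⟩
      · cases e
      · exact .inl ⟨hh, .var hw⟩
    | lam h1 h2 =>
      rcases key hs h1 with e | ⟨hh, hw⟩
      · cases e
      · exact .inl ⟨hh, .lam hw h2⟩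
    | app h1 h2 h3 =>
      rcases key hs h1 with e | ⟨hh, hw⟩
      · cases e
        rcases ih h2 with ⟨hh, k⟩ | ⟨A1, k1, k2⟩
        · exact .inl ⟨hh, .app .refl k h3⟩
        · exact .inr ⟨_, .appL _ _ k1, .app .refl k2 h3⟩
      · exact .inl ⟨hh, .app hw h2 h3⟩

theorem Std.lam_inv {p A N} (h : Std (.lam p A) N) : ∃ A', N = .lam p A' ∧ Std A A' := by
  have key : ∀ {K}, WSteps (.lam p A) K → CTerm.lam p A = K := by
    intro K hw
    rcases Relation.ReflTransGen.cases_head hw with h0 | ⟨c, h5, _⟩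
    · exact h0
    · cases h5 with
      | root h => cases h
  cases h with
  | var h1 => cases key h1
  | lam h1 h2 => cases key h1; exact ⟨_, rfl, h2⟩
  | app h1 _ _ => cases key h1

theorem Std.head_forth {P M M'} (h : CHead (GRoot P) M M') : ∀ {N}, Std M N →
    ((∃ p q, P p q ∧ PSil p q) ∧ Std M' N) ∨
      ∃ N', CHead (GRoot P) N N' ∧ Std M' N' := by
  induction h with
  | spine h =>
    intro N hN
    rcases hN.spine_forth h with k | ⟨N', k1, k2⟩
    · exact .inl k
    · exact .inr ⟨N', .spine k1, k2⟩
  | lam p h ih =>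
    intro N hN
    obtain ⟨A', rfl, hA⟩ := hN.lam_inv
    rcases ih hA with ⟨hh, k⟩ | ⟨N', k1, k2⟩
    · exact .inl ⟨hh, .lam .refl k⟩
    · exact .inr ⟨_, .lam p k1, .lam .refl k2⟩

/-! ### Head normal forms -/

inductive Neutral : CTerm → Prop
  | var (n : ℕ) : Neutral (.var n)
  | app (p : Player) {t : CTerm} (u : CTerm) : Neutral t → Neutral (.app p t u)

theorem Neutral.no_spine {P t} (h : Neutral t) : ∀ u, ¬ CSpine (GRoot P) t u := by
  induction h with
  | var n => intro u hu; cases hu with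
    | root h => cases h
  | app p u h ih =>
    intro v hv
    cases hv with
    | root h' => cases h' with
      | beta => cases h
    | appL _ _ h' => exact ih _ h'

theorem hstepCh_iff {t u} : HStepCh t u ↔ CHead (GRoot PSil) t u ∨ CHead (GRoot PInt) t u := by
  unfold HStepCh HStepTau HStepInt; rw [silentRoot_eq, interRoot_eq]

theorem Neutral.hnf {t} (h : Neutral t) : t.HNF := by
  have key : ∀ P u, ¬ CHead (GRoot P) t u := by
    intro P u hu
    cases hu with
    | spine h' => exact h.no_spine _ h'
    | lam p h' => cases h
  intro u hu
  rcases hstepCh_iff.1 hu with hu | hu <;> exact key _ _ hu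

theorem neutral_or_spine (p : Player) (t u : CTerm) : Neutral (.app p t u) ∨
    ∃ v, CSpine (GRoot PSil) (.app p t u) v ∨ CSpine (GRoot PInt) (.app p t u) v := by
  induction t generalizing p u with
  | var n => exact .inl (.app p u (.var n))
  | lam q t ih =>
    right
    by_cases h : p = q
    · exact ⟨_, .inl (.root (.beta (P := PSil) h t u))⟩
    · refine ⟨_, .inr (.root (.beta ?_ t u))⟩
      unfold PInt
      cases p <;> cases q <;> first | rfl | exact absurd rfl h
  | app q a b iha ihb =>
    rcases iha q b with h | ⟨v, h | h⟩
    · exact .inl (.app p u h)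
    · exact .inr ⟨_, .inl (.appL p u h)⟩
    · exact .inr ⟨_, .inr (.appL p u h)⟩

theorem CTerm.HNF.lam {t} (p : Player) (h : t.HNF) : (CTerm.lam p t).HNF := by
  have key : ∀ P u, CHead (GRoot P) (.lam p t) u → ∃ u', CHead (GRoot P) t u' := by
    intro P u hu
    cases hu with
    | spine h' => cases h' with
      | root h => cases h
    | lam p h' => exact ⟨_, h'⟩
  intro u hu
  rcases hstepCh_iff.1 hu with hu | hu
  · obtain ⟨u', hu'⟩ := key _ _ hu
    exact h u' (hstepCh_iff.2 (.inl hu'))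
  · obtain ⟨u', hu'⟩ := key _ _ hu
    exact h u' (hstepCh_iff.2 (.inr hu'))

theorem CTerm.HNF.of_lam {t p} (h : (CTerm.lam p t).HNF) : t.HNF := by
  intro u hu
  rcases hstepCh_iff.1 hu with hu | hu
  · exact h _ (hstepCh_iff.2 (.inl (.lam p hu)))
  · exact h _ (hstepCh_iff.2 (.inr (.lam p hu)))

theorem CTerm.HNF.neutral {p t u} (h : (CTerm.app p t u).HNF) : Neutral (.app p t u) := by
  rcases neutral_or_spine p t u with h' | ⟨v, h' | h'⟩
  · exact h'
  · exact absurd (hstepCh_iff.2 (.inl (.spine h'))) (h v)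
  · exact absurd (hstepCh_iff.2 (.inr (.spine h'))) (h v)

theorem Neutral.back {N} (h : Neutral N) : ∀ {M}, Std M N → ∃ M1, WSteps M M1 ∧ Neutral M1 := by
  induction h with
  | var n =>
    intro M hM
    cases hM with
    | var h1 => exact ⟨_, h1, .var n⟩
  | app p u h ih =>
    intro M hM
    cases hM with
    | app h1 h2 h3 =>
      obtain ⟨A1, k1, k2⟩ := ih h2
      exact ⟨_, h1.trans (WSteps.appL k1 _ _), .app p _ k2⟩

theorem Std.hnf_back {M N} (h : Std M N) : N.HNF → ∃ M1, HSteps M M1 ∧ M1.HNF := by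
  induction h with
  | var h1 => intro hN; exact ⟨_, h1.head, hN⟩
  | @lam M A A' p h1 h2 ih =>
    intro hN
    obtain ⟨A1, k1, k2⟩ := ih hN.of_lam
    exact ⟨_, h1.head.trans (k1.lam p), k2.lam p⟩
  | @app M A B A' B' p h1 h2 h3 _ _ =>
    intro hN
    obtain ⟨M1, k1, k2⟩ := hN.neutral.back (Std.app h1 h2 h3)
    exact ⟨M1, k1.head, k2.hnf⟩

theorem HSteps.not_hnf {P M M1 M2} (h : HSteps M M1) (h' : CHead (GRoot P) M1 M2)
    (hP : HStepCh M1 M2) : ¬ M.HNF := by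
  intro hM
  rcases Relation.ReflTransGen.cases_head h with rfl | ⟨c, h1, _⟩
  · exact hM _ hP
  · exact hM _ (hstepCh_iff.2 (.inl h1))

theorem Std.hnf_forth {M N} (h : Std M N) (hM : M.HNF) : N.HNF := by
  intro N' hN
  rcases hstepCh_iff.1 hN with hN | hN
  · obtain ⟨M1, M2, k1, k2, _⟩ := h.head_back hN
    exact k1.not_hnf k2 (hstepCh_iff.2 (.inl k2)) hM
  · obtain ⟨M1, M2, k1, k2, _⟩ := h.head_back hN
    exact k1.not_hnf k2 (hstepCh_iff.2 (.inr k2)) hM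

/-! ### Evaluation is invariant under silent reduction -/

theorem hstepTau_eq : HStepTau = CHead (GRoot PSil) := by
  unfold HStepTau; rw [silentRoot_eq]

theorem hstepInt_eq : HStepInt = CHead (GRoot PInt) := by
  unfold HStepInt; rw [interRoot_eq]

theorem BigStep.expand {M N k} (h : HSteps M N) (h' : BigStep N k) : BigStep M k := by
  induction h using Relation.ReflTransGen.head_induction_on with
  | refl => exact h'
  | head h1 _ ih => exact .silent (by rw [hstepTau_eq]; exact h1) ih

theorem BigStep.back {N k} (h : BigStep N k) : ∀ {M}, Std M N → BigStep M k := by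
  induction h with
  | nf h =>
    intro M hM
    obtain ⟨M1, k1, k2⟩ := hM.hnf_back h
    exact (BigStep.nf k2).expand k1
  | silent h _ ih =>
    intro M hM
    rw [hstepTau_eq] at h
    exact ih (hM.step h.full)
  | inter h _ ih =>
    intro M hM
    rw [hstepInt_eq] at h
    obtain ⟨M1, M2, k1, k2, k3⟩ := hM.head_back h
    exact (BigStep.inter (by rw [hstepInt_eq]; exact k2) (ih k3)).expand k1

theorem BigStep.forth {M k} (h : BigStep M k) : ∀ {N}, Std M N → BigStep N k := by
  induction h with
  | nf h => intro N hN; exact .nf (hN.hnf_forth h)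
  | silent h _ ih =>
    intro N hN
    rw [hstepTau_eq] at h
    rcases hN.head_forth h with ⟨_, k⟩ | ⟨N', k1, k2⟩
    · exact ih k
    · exact .silent (by rw [hstepTau_eq]; exact k1) (ih k2)
  | inter h _ ih =>
    intro N hN
    rw [hstepInt_eq] at h
    rcases hN.head_forth h with ⟨⟨p, q, hp, hq⟩, k⟩ | ⟨N', k1, k2⟩
    · exact (pSil_not_pInt hq hp).elim
    · exact .inter (by rw [hstepInt_eq]; exact k1) (ih k2)

theorem CFull.fill {R t u} (h : CFull R t u) (C : CCtx) : CFull R (C.fill t) (C.fill u) := by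
  induction C with
  | hole => exact h
  | lam p C ih => exact .lam p ih
  | appL p C u ih => exact .appL p u ih
  | appR p s C ih => exact .appR p s ih

theorem Lam.tag_lift (t : Lam) (p : Player) : ∀ d, (t.liftAt d).tag p = (t.tag p).liftAt d := by
  induction t with
  | var n => intro d; rfl
  | lam t ih => intro d; simp only [Lam.liftAt, Lam.tag, CTerm.liftAt, ih]
  | app t u iht ihu => intro d; simp only [Lam.liftAt, Lam.tag, CTerm.liftAt, iht, ihu]

theorem Lam.tag_subst (t : Lam) (p : Player) : ∀ x u,
    (t.subst x u).tag p = (t.tag p).subst x (u.tag p) := by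
  induction t with
  | var n => intro x u; simp only [Lam.subst, Lam.tag, CTerm.subst]; split_ifs <;> rfl
  | lam t ih => intro x u; simp only [Lam.subst, Lam.tag, CTerm.subst, ih, Lam.tag_lift]
  | app t s iht ihs => intro x u; simp only [Lam.subst, Lam.tag, CTerm.subst, iht, ihs]

theorem LBeta.tag {t u} (h : LBeta t u) (p : Player) :
    CFull (GRoot PSil) (t.tag p) (u.tag p) := by
  unfold LBeta at h
  induction h with
  | root h => cases h with
    | beta t u => rw [Lam.tag_subst]; exact .root (.beta (P := PSil) rfl _ _)
  | lam _ ih => exact .lam p ih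
  | appL u _ ih => exact .appL p _ ih
  | appR t _ ih => exact .appR p _ ih

theorem LBeta.intEq {t u} (h : LBeta t u) : IntEq t u := by
  have hs : ∀ C : CCtx, Std (C.fill (t.tag .black)) (C.fill (u.tag .black)) :=
    fun C => Std.step ((h.tag .black).fill C) (Std.refl _)
  exact ⟨fun C k hk => hk.forth (hs C), fun C k hk => hk.back (hs C)⟩

def CCtx.comp : CCtx → CCtx → CCtx
  | .hole, D => D
  | .lam p C, D => .lam p (C.comp D)
  | .appL p C u, D => .appL p (C.comp D) u
  | .appR p s C, D => .appR p s (C.comp D)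

theorem CCtx.fill_comp (C D : CCtx) (t : CTerm) : (C.comp D).fill t = C.fill (D.fill t) := by
  induction C with
  | hole => rfl
  | lam p C ih => simp only [CCtx.comp, CCtx.fill, ih]
  | appL p C u ih => simp only [CCtx.comp, CCtx.fill, ih]
  | appR p s C ih => simp only [CCtx.comp, CCtx.fill, ih]

theorem LCtx.tag_fill (C : LCtx) (t : Lam) (p : Player) :
    (C.fill t).tag p = (C.tag p).fill (t.tag p) := by
  induction C with
  | hole => rfl
  | lam C ih => simp only [LCtx.fill, LCtx.tag, CCtx.fill, Lam.tag, ih]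
  | appL C u ih => simp only [LCtx.fill, LCtx.tag, CCtx.fill, Lam.tag, ih]
  | appR s C ih => simp only [LCtx.fill, LCtx.tag, CCtx.fill, Lam.tag, ih]

theorem IntLe.fill {t u} (h : IntLe t u) (C : LCtx) : IntLe (C.fill t) (C.fill u) := by
  intro D k hk
  rw [LCtx.tag_fill, ← CCtx.fill_comp] at hk ⊢
  exact h _ _ hk

theorem IntEq.trans' {t u s} (h : IntEq t u) (h' : IntEq u s) : IntEq t s :=
  ⟨fun C k hk => h'.1 C k (h.1 C k hk), fun C k hk => h.2 C k (h'.2 C k hk)⟩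

theorem BigStep.ne_zero {t u k} (h1 : BigStep t k) (hs : CHead (GRoot PInt) t u) : k ≠ 0 := by
  cases h1 with
  | nf h => exact absurd (hstepCh_iff.2 (.inr hs)) (h _)
  | silent h _ =>
    rw [hstepTau_eq] at h
    obtain ⟨_, p, q, k1, k2⟩ := h.det hs
    exact (pSil_not_pInt k1 k2).elim
  | inter h _ => omega

theorem eta_not_intEq :
    ¬ IntEq (.lam (.app ((Lam.var 0).liftAt 0) (.var 0))) (.var 0) := by
  intro h
  have h0 : BigStep ((CCtx.appL .white .hole (.var 0)).fill ((Lam.var 0).tag .black)) 0 :=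
    .nf (Neutral.hnf (.app _ _ (.var 0)))
  have h1 := h.2 _ _ h0
  have hs : CHead (GRoot PInt) ((CCtx.appL .white .hole (.var 0)).fill
      ((Lam.lam (.app ((Lam.var 0).liftAt 0) (.var 0))).tag .black)) _ :=
    .spine (.root (.beta (P := PInt) (p := .black) (q := .white) rfl _ _))
  exact absurd rfl (h1.ne_zero hs)

/-- Interaction equivalence `≡int` is a consistent λ-theory: a compatible equivalence
containing β-conversion and different from the total relation; moreover it is not
extensional (it does not contain η-conversion). -/
theorem intEq_consistent_lambda_theory :
    (∀ t, IntEq t t) ∧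
    (∀ t u, IntEq t u → IntEq u t) ∧
    (∀ t u s, IntEq t u → IntEq u s → IntEq t s) ∧
    (∀ t u, IntEq t u → ∀ C : LCtx, IntEq (C.fill t) (C.fill u)) ∧
    (∀ t u, LBetaConv t u → IntEq t u) ∧
    (∃ t u, ¬ IntEq t u) ∧
    (∃ t u, LEtaConv t u ∧ ¬ IntEq t u) := by
  refine ⟨fun t => ⟨fun _ _ h => h, fun _ _ h => h⟩, fun t u h => ⟨h.2, h.1⟩,
    fun t u s h h' => h.trans' h', fun t u h C => ⟨h.1.fill C, h.2.fill C⟩, ?_,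
    ⟨_, _, eta_not_intEq⟩,
    ⟨_, _, Relation.ReflTransGen.single (.inl (.root (.eta (.var 0)))), eta_not_intEq⟩⟩
  intro t u h
  induction h with
  | refl => exact ⟨fun _ _ h => h, fun _ _ h => h⟩
  | tail _ h ih =>
    rcases h with h | h
    · exact ih.trans' h.intEq
    · exact ih.trans' ⟨h.intEq.2, h.intEq.1⟩
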